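/- (Knitting lemma, homotopy invariance.) Let P be a metric space, let (M_x)_{x∈P} be a family of complete metric spaces, and let (μ_{xy})_{x,y∈P} be a strongly approximate action of the pair groupoid of P, with data ε > 0, L ≥ 0, exponents (a_i, b_i) with a_i + b_i = 2+ε, and constants C_i > 0. For a Lipschitz path γ : [0,1] → P, let φ_γ : M_{γ(1)} → M_{γ(0)} denote the uniform limit of the compositions μ_{γ(0)γ(t_1)} ∘ μ_{γ(t_1)γ(t_2)} ∘ ⋯ ∘ μ_{γ(t_{k-1})γ(1)} as the mesh of the subdivision (0, t_1, …, t_{k-1}, 1) of [0,1] tends to zero. If γ⁰ and γ¹ are Lipschitz paths from x to y and there exists a Lipschitz homotopy H : [0,1]² → P from γ⁰ to γ¹ (H continuous and Lipschitz, H(0,·) = γ⁰, H(1,·) = γ¹, H(s,0) = x, H(s,1) = y for all s), then φ_{γ⁰} = φ_{γ¹}. -/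

import Mathlib

/-!
Sample the homotopy on the `N × N` grid, `p i j = H (i/N) (j/N)`, so that neighbouring points and
the two ends of each diagonal are within `r = 2ℓ/N`. Two consecutive rows are compared by
knitting (`knit_row`): pushing the rung `μ (p i j) (p (i+1) j)` through one column replaces one
side of a grid square by the other, and the four-point estimate bounds the resulting error by a
constant times `r ^ (2 + ε)`; composing on the left with the part of the row already treated
multiplies it by at most `(1 + L r) ^ N ≤ exp (2 L ℓ)` (`compAlong_lip`). The first and the last
rung are identities, since the homotopy fixes the endpoints. Summing over the `N` columns and the
`N` rows gives a total error of order `N² · N ^ (-(2 + ε)) = N ^ (-ε)`, which tends to `0`, while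
the compositions along the rows `0` and `N` converge to `φ0` and `φ1`.
-/

open scoped ENNReal

noncomputable section

/-- Extended uniform distance `sup_m edist (u m) (v m)` between two maps. -/
def unifDist {α β : Type*} [PseudoEMetricSpace β] (u v : α → β) : ℝ≥0∞ :=
  ⨆ m, edist (u m) (v m)

/-- `h` is Lipschitz with (real) constant `K`:
`edist (h y) (h y') ≤ K * edist y y'` for all `y, y'`. -/
def LipWith {α β : Type*} [PseudoEMetricSpace α] [PseudoEMetricSpace β]
    (K : ℝ) (h : α → β) : Prop :=
  ∀ y y', edist (h y) (h y') ≤ ENNReal.ofReal K * edist y y'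

/-- The composition `μ (x 0) (x 1) ∘ μ (x 1) (x 2) ∘ ⋯ ∘ μ (x (k-1)) (x k)`
of the maps `μ` along the finite chain of points `x 0, …, x k`. -/
def compAlong {P : Type*} {M : P → Type*} (μ : ∀ x y : P, M y → M x) (x : ℕ → P) :
    ∀ k : ℕ, M (x k) → M (x 0)
  | 0 => id
  | k+1 => fun m => compAlong μ x k (μ (x k) (x (k+1)) m)

/-- Transport a map `M a → M b` along equalities of base points. -/
def castM {P : Type*} (M : P → Type*) {a b c d : P} (h1 : a = c) (h2 : b = d)
    (f : M a → M b) : M c → M d :=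
  fun m => cast (congrArg M h2) (f (cast (congrArg M h1.symm) m))

/-- A subdivision `(t_0, …, t_k)` of the interval between `s` and `t`: a finite sequence
with `t_0 = s`, `t_k = t`, arranged in increasing order if `s < t` and decreasing order
if `s > t`. -/
structure Subdivision (s t : ℝ) where
  k : ℕ
  pt : ℕ → ℝ
  k_pos : 0 < k
  first : pt 0 = s
  last : pt k = t
  mono_of_le : s ≤ t → ∀ i j, i ≤ j → j ≤ k → pt i ≤ pt j
  anti_of_ge : t ≤ s → ∀ i j, i ≤ j → j ≤ k → pt j ≤ pt i

/-- The mesh `max_{1 ≤ j ≤ k} |t_j - t_{j-1}|` of a subdivision. -/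
def Subdivision.mesh {s t : ℝ} (I : Subdivision s t) : ℝ :=
  ⨆ j : Fin I.k, |I.pt (j.1 + 1) - I.pt j.1|

/-- The value `ζ(x) = Σ_{ℓ ≥ 1} ℓ^{-x}` of the Riemann zeta function at a real `x`. -/
def zetaR (x : ℝ) : ℝ := ∑' m : ℕ, ((m : ℝ) + 1) ^ (-x)

/-- A strongly approximate action of the pair groupoid of a metric space `P` on a family
`(M x)_{x ∈ P}` of complete metric spaces: continuous maps `μ_{xy} : M y → M x` with
`μ_{xx} = id`, `μ_{xy}` Lipschitz with constant `1 + L d_P(x,y)`, and the strong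
four-point estimate with exponents `a_i + b_i = 2 + ε`. -/
structure IsStrongApproxAction {P : Type*} [MetricSpace P] {M : P → Type*}
    [∀ x, MetricSpace (M x)] (μ : ∀ x y : P, M y → M x)
    (ε L : ℝ) (n : ℕ) (a b C : Fin n → ℝ) : Prop where
  continuous : ∀ x y, Continuous (μ x y)
  id_eq : ∀ x, μ x x = id
  eps_pos : 0 < ε
  L_nonneg : 0 ≤ L
  n_pos : 0 < n
  a_pos : ∀ i, 0 < a i
  b_pos : ∀ i, 0 < b i
  ab_eq : ∀ i, a i + b i = 2 + ε
  C_pos : ∀ i, 0 < C i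
  lip : ∀ x y, LipWith (1 + L * dist x y) (μ x y)
  four_point : ∀ x u v y,
    unifDist (fun m => μ x u (μ u y m)) (fun m => μ x v (μ v y m)) ≤
      ENNReal.ofReal ((1 + L * dist u x) * ∑ i, C i * dist y v ^ a i * dist u v ^ b i) +
        ENNReal.ofReal (∑ i, C i * dist x u ^ b i * dist u v ^ a i)

/-- The composition `μ_{γ(t_0)γ(t_1)} ∘ ⋯ ∘ μ_{γ(t_{k-1})γ(t_k)}` along the image under a
path `γ` of a subdivision `I` of the interval between `s` and `t`, viewed as a map
`M (γ t) → M (γ s)`. -/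
def Subdivision.compPath {s t : ℝ} (I : Subdivision s t) {P : Type*} {M : P → Type*}
    (μ : ∀ x y : P, M y → M x) (γ : ℝ → P) : M (γ t) → M (γ s) :=
  castM M (congrArg γ I.last) (congrArg γ I.first)
    (compAlong μ (fun j => γ (I.pt j)) I.k)

/-! ### Knitting two neighbouring chains -/

/-- The error `(2 + L r) (∑ C_i) r ^ (2 + ε)` allowed by the four-point estimate when all the
distances occurring in it are at most `r`. -/
def squareErr {n : ℕ} (ε L : ℝ) (C : Fin n → ℝ) (r : ℝ) : ℝ :=
  (2 + L * r) * ((∑ i, C i) * r ^ (2 + ε))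

lemma sum_le_of_dist_le {n : ℕ} {ε : ℝ} {a b C : Fin n → ℝ} (ha : ∀ i, 0 < a i)
    (hb : ∀ i, 0 < b i) (hab : ∀ i, a i + b i = 2 + ε) (hC : ∀ i, 0 < C i)
    {s t r : ℝ} (hs : 0 ≤ s) (ht : 0 ≤ t) (hsr : s ≤ r) (htr : t ≤ r) :
    ∑ i, C i * s ^ a i * t ^ b i ≤ (∑ i, C i) * r ^ (2 + ε) := by
  have hr : 0 ≤ r := hs.trans hsr
  rw [Finset.sum_mul]
  refine Finset.sum_le_sum fun i _ => ?_
  have h1 : s ^ a i ≤ r ^ a i := Real.rpow_le_rpow hs hsr (ha i).le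
  have h2 : t ^ b i ≤ r ^ b i := Real.rpow_le_rpow ht htr (hb i).le
  have h3 : r ^ (2 + ε) = r ^ a i * r ^ b i := by
    rw [← hab i]
    exact Real.rpow_add_of_nonneg hr (ha i).le (hb i).le
  rw [h3, mul_assoc]
  have := (hC i).le
  gcongr

section Knitting

variable {P : Type*} [MetricSpace P] {M : P → Type*} [∀ x, MetricSpace (M x)]
  {μ : ∀ x y : P, M y → M x} {ε L : ℝ} {n : ℕ} {a b C : Fin n → ℝ}

lemma square_le (h : IsStrongApproxAction μ ε L n a b C) {r : ℝ} {x u v y : P}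
    (hxu : dist x u ≤ r) (hyv : dist y v ≤ r) (huv : dist u v ≤ r) (m : M y) :
    edist (μ x u (μ u y m)) (μ x v (μ v y m)) ≤ ENNReal.ofReal (squareErr ε L C r) := by
  have hr : 0 ≤ r := dist_nonneg.trans hxu
  have hL := h.L_nonneg
  have hT : 0 ≤ (∑ i, C i) * r ^ (2 + ε) :=
    mul_nonneg (Finset.sum_nonneg fun i _ => (h.C_pos i).le) (Real.rpow_nonneg hr _)
  have h1 := sum_le_of_dist_le h.a_pos h.b_pos h.ab_eq h.C_pos
    dist_nonneg dist_nonneg hyv huv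
  have h2 := sum_le_of_dist_le h.b_pos h.a_pos
    (fun i => (add_comm _ _).trans (h.ab_eq i)) h.C_pos
    dist_nonneg dist_nonneg hxu huv
  have h0 : ∀ m, edist (μ x u (μ u y m)) (μ x v (μ v y m)) ≤ _ := fun m =>
    (le_iSup (fun m => edist (μ x u (μ u y m)) (μ x v (μ v y m))) m).trans (h.four_point x u v y)
  refine (h0 m).trans ?_
  have e : squareErr ε L C r = (1 + L * r) * ((∑ i, C i) * r ^ (2 + ε))
      + (∑ i, C i) * r ^ (2 + ε) := by
    unfold squareErr; ring
  rw [e, ENNReal.ofReal_add (by positivity) hT]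
  refine add_le_add (ENNReal.ofReal_le_ofReal ?_) (ENNReal.ofReal_le_ofReal h2)
  rw [dist_comm u x]
  exact mul_le_mul (by gcongr) h1 (Finset.sum_nonneg fun i _ => by
    have := (h.C_pos i).le
    positivity) (by positivity)

lemma compAlong_lip (h : IsStrongApproxAction μ ε L n a b C) {r : ℝ} {p : ℕ → P}
    (hp : ∀ j, dist (p j) (p (j + 1)) ≤ r) (k : ℕ) :
    LipWith ((1 + L * r) ^ k) (compAlong μ p k) := by
  have hr : 0 ≤ r := dist_nonneg.trans (hp 0)
  have hL := h.L_nonneg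
  induction k with
  | zero => intro m m'; simp [compAlong]
  | succ k ih =>
    intro m m'
    calc edist (compAlong μ p (k + 1) m) (compAlong μ p (k + 1) m')
        ≤ ENNReal.ofReal ((1 + L * r) ^ k) *
          edist (μ (p k) (p (k + 1)) m) (μ (p k) (p (k + 1)) m') := ih _ _
      _ ≤ ENNReal.ofReal ((1 + L * r) ^ k) * (ENNReal.ofReal (1 + L * r) * edist m m') := by
          gcongr
          refine (h.lip _ _ m m').trans ?_
          have := hp k
          gcongr
      _ = ENNReal.ofReal ((1 + L * r) ^ (k + 1)) * edist m m' := by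
          rw [← mul_assoc, ← ENNReal.ofReal_mul (by positivity), pow_succ]

/-- A rung at the right end of two neighbouring chains `p`, `q` can be moved to their left end:
each of the `k` squares contributes one four-point error, amplified by the Lipschitz constant of
the part of `p` to its left, which `A` bounds. -/
lemma knit_row (h : IsStrongApproxAction μ ε L n a b C) {r A : ℝ} {p q : ℕ → P}
    (hp : ∀ j, dist (p j) (p (j + 1)) ≤ r) (hq : ∀ j, dist (q j) (q (j + 1)) ≤ r)
    (hpq : ∀ j, dist (p (j + 1)) (q j) ≤ r) (k : ℕ) (hA : (1 + L * r) ^ k ≤ A) (m : M (q k)) :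
    edist (compAlong μ p k (μ (p k) (q k) m)) (μ (p 0) (q 0) (compAlong μ q k m)) ≤
      k * ENNReal.ofReal (A * squareErr ε L C r) := by
  have hr : 0 ≤ r := dist_nonneg.trans (hp 0)
  have hL := h.L_nonneg
  have hA0 : 0 ≤ A := le_trans (by positivity) hA
  induction k with
  | zero => simp [compAlong]
  | succ k ih =>
    have hA' : (1 + L * r) ^ k ≤ A :=
      (pow_le_pow_right₀ (by nlinarith [mul_nonneg hL hr]) k.le_succ).trans hA
    calc edist (compAlong μ p (k + 1) (μ (p (k + 1)) (q (k + 1)) m))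
          (μ (p 0) (q 0) (compAlong μ q (k + 1) m))
        ≤ edist (compAlong μ p k (μ (p k) (p (k + 1)) (μ (p (k + 1)) (q (k + 1)) m)))
            (compAlong μ p k (μ (p k) (q k) (μ (q k) (q (k + 1)) m))) +
          edist (compAlong μ p k (μ (p k) (q k) (μ (q k) (q (k + 1)) m)))
            (μ (p 0) (q 0) (compAlong μ q k (μ (q k) (q (k + 1)) m))) := edist_triangle _ _ _
      _ ≤ ENNReal.ofReal A * ENNReal.ofReal (squareErr ε L C r) +
          k * ENNReal.ofReal (A * squareErr ε L C r) := by
          refine add_le_add ((compAlong_lip h hp k _ _).trans ?_) (ih hA' _)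
          refine mul_le_mul' (ENNReal.ofReal_le_ofReal hA') (square_le h (hp k) ?_ (hpq k) m)
          rw [dist_comm]; exact hq k
      _ = ((k + 1 : ℕ) : ℝ≥0∞) * ENNReal.ofReal (A * squareErr ε L C r) := by
          rw [← ENNReal.ofReal_mul hA0]; push_cast; ring

end Knitting

/-! ### Transport along equalities of endpoints -/

/-- When the outer rungs become identities, a bound on the knitted maps is a bound between the
two transported maps. -/
lemma edist_castM_le {P : Type*} {M : P → Type*} [∀ x, MetricSpace (M x)]
    {μ : ∀ x y : P, M y → M x} (hid : ∀ x, μ x x = id) {c c' d d' x y : P} (hc : c = y) (hc' : c' = y)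
    (hd : d = x) (hd' : d' = x) (f : M c → M d) (g : M c' → M d') {B : ℝ≥0∞}
    (hB : ∀ m, edist (f (μ c c' m)) (μ d d' (g m)) ≤ B) (m : M y) :
    edist (castM M hc hd f m) (castM M hc' hd' g m) ≤ B := by
  subst hc hd hc' hd'
  simpa [hid, castM] using hB m

lemma castM_castM {P : Type*} (M : P → Type*) {a b c d e f : P} (h1 : a = c) (h2 : b = d)
    (h3 : c = e) (h4 : d = f) (g : M a → M b) :
    castM M h3 h4 (castM M h1 h2 g) = castM M (h1.trans h3) (h2.trans h4) g := by
  subst h1 h2 h3 h4; rfl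

lemma castM_compAlong_congr {P : Type*} {M : P → Type*} (μ : ∀ x y : P, M y → M x) {x y : P}
    {p q : ℕ → P} (hpq : p = q) (k : ℕ) (hp : p k = y) (hp' : p 0 = x) (hq : q k = y)
    (hq' : q 0 = x) :
    castM M hp hp' (compAlong μ p k) = castM M hq hq' (compAlong μ q k) := by
  subst hpq; rfl

/-! ### The uniform grid and the total error -/

/-- The grid `j / N`, truncated at `1` so that it stays in `[0, 1]` for every index `j`. -/
def grid (N j : ℕ) : ℝ := min ((j : ℝ) / N) 1

lemma grid_mem (N j : ℕ) : grid N j ∈ Set.Icc (0 : ℝ) 1 :=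
  ⟨le_min (by positivity) zero_le_one, min_le_right _ _⟩

lemma grid_zero (N : ℕ) : grid N 0 = 0 := by simp [grid]

lemma grid_self {N : ℕ} (hN : 0 < N) : grid N N = 1 := by
  have : (N : ℝ) ≠ 0 := by positivity
  simp [grid, this]

lemma grid_mono (N : ℕ) : Monotone (grid N) := fun i j hij => by
  unfold grid; gcongr

lemma grid_step (N j : ℕ) : |grid N j - grid N (j + 1)| ≤ 1 / N := by
  have h := grid_mono N (Nat.le_succ j)
  rw [abs_sub_comm, abs_of_nonneg (sub_nonneg.2 h)]
  have e : ((j + 1 : ℕ) : ℝ) / N = j / N + 1 / N := by push_cast; ring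
  have h0 : (0 : ℝ) ≤ 1 / N := by positivity
  unfold grid
  rw [e, sub_le_iff_le_add]
  rcases le_total ((j : ℝ) / N) 1 with h1 | h1
  · rw [min_eq_left h1]; linarith [min_le_left ((j : ℝ) / N + 1 / N) 1]
  · rw [min_eq_right h1]; linarith [min_le_right ((j : ℝ) / N + 1 / N) 1]

/-- The subdivision of `[0, 1]` into `N` intervals of length `1 / N`. -/
def gridSub {N : ℕ} (hN : 0 < N) : Subdivision 0 1 where
  k := N
  pt := grid N
  k_pos := hN
  first := grid_zero N
  last := grid_self hN
  mono_of_le := fun _ _ _ hij _ => grid_mono N hij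
  anti_of_ge := fun h => absurd h (by norm_num)

lemma gridSub_mesh_le {N : ℕ} (hN : 0 < N) : (gridSub hN).mesh ≤ 1 / N := by
  refine Real.iSup_le (fun j => ?_) (by positivity)
  rw [abs_sub_comm]
  exact grid_step N j

/-- The total error of `N` rows of `N` squares is at most a constant times `N ^ (-ε)`. -/
lemma total_le {n : ℕ} {ε L lam : ℝ} {C : Fin n → ℝ} (hL : 0 ≤ L) (hlam : 0 ≤ lam)
    (hC : ∀ i, 0 < C i) {N : ℕ} (hN : 0 < N) :
    (N : ℝ) * (N * (Real.exp (L * lam) * squareErr ε L C (lam / N))) ≤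
      Real.exp (L * lam) * ((2 + L * lam) * ((∑ i, C i) * lam ^ (2 + ε))) * (N : ℝ) ^ (-ε) := by
  have hN1 : (1 : ℝ) ≤ N := by exact_mod_cast hN
  have hN0 : (0 : ℝ) < N := by linarith
  have hS : 0 ≤ ∑ i, C i := Finset.sum_nonneg fun i _ => (hC i).le
  have hpow : (N : ℝ) * (N * (lam / N) ^ (2 + ε)) = lam ^ (2 + ε) * (N : ℝ) ^ (-ε) := by
    rw [Real.div_rpow hlam hN0.le, Real.rpow_add hN0, Real.rpow_neg hN0.le, Real.rpow_two]
    have := (Real.rpow_pos_of_pos hN0 ε).ne'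
    field_simp
  have hle : lam / N ≤ lam := div_le_self hlam hN1
  calc (N : ℝ) * (N * (Real.exp (L * lam) * squareErr ε L C (lam / N)))
      = Real.exp (L * lam) * ((2 + L * (lam / N)) *
          ((∑ i, C i) * (N * (N * (lam / N) ^ (2 + ε))))) := by unfold squareErr; ring
    _ ≤ Real.exp (L * lam) * ((2 + L * lam) *
          ((∑ i, C i) * (N * (N * (lam / N) ^ (2 + ε))))) := by gcongr
    _ = _ := by rw [hpow]; ring

/-! ### Homotopy invariance -/

/-- Knitting lemma (homotopy invariance): for a strongly approximate action `(μ_{xy})`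
of the pair groupoid of `P`, if `γ⁰` and `γ¹` are Lipschitz paths from `x` to `y`,
`φ_{γ⁰}` and `φ_{γ¹}` are the uniform limits of the compositions of the `μ` along
subdivisions of `[0,1]` as the mesh tends to `0`, and there is a Lipschitz homotopy
`H : [0,1]² → P` from `γ⁰` to `γ¹` fixing the endpoints, then `φ_{γ⁰} = φ_{γ¹}`. -/
theorem stmt16 {P : Type*} [MetricSpace P] {M : P → Type*} [∀ x, MetricSpace (M x)]
    [∀ x, CompleteSpace (M x)] (μ : ∀ x y : P, M y → M x)
    (ε L : ℝ) (n : ℕ) (a b C : Fin n → ℝ)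
    (h : IsStrongApproxAction μ ε L n a b C)
    (x y : P) (γ0 γ1 : ℝ → P) (K0 K1 : ℝ)
    (hγ0lip : ∀ u ∈ Set.Icc (0 : ℝ) 1, ∀ v ∈ Set.Icc (0 : ℝ) 1,
      dist (γ0 u) (γ0 v) ≤ K0 * |u - v|)
    (hγ1lip : ∀ u ∈ Set.Icc (0 : ℝ) 1, ∀ v ∈ Set.Icc (0 : ℝ) 1,
      dist (γ1 u) (γ1 v) ≤ K1 * |u - v|)
    (hγ00 : γ0 0 = x) (hγ01 : γ0 1 = y) (hγ10 : γ1 0 = x) (hγ11 : γ1 1 = y)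
    (H : ℝ → ℝ → P) (ℓ : ℝ)
    (hH : ∀ s t s' t' : ℝ, s ∈ Set.Icc (0 : ℝ) 1 → t ∈ Set.Icc (0 : ℝ) 1 →
      s' ∈ Set.Icc (0 : ℝ) 1 → t' ∈ Set.Icc (0 : ℝ) 1 →
      dist (H s t) (H s' t') ≤ ℓ * (|s - s'| + |t - t'|))
    (hH0 : ∀ t ∈ Set.Icc (0 : ℝ) 1, H 0 t = γ0 t)
    (hH1 : ∀ t ∈ Set.Icc (0 : ℝ) 1, H 1 t = γ1 t)
    (hHx : ∀ s ∈ Set.Icc (0 : ℝ) 1, H s 0 = x)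
    (hHy : ∀ s ∈ Set.Icc (0 : ℝ) 1, H s 1 = y)
    (φ0 φ1 : M y → M x)
    (hφ0 : ∀ η : ℝ≥0∞, 0 < η → ∃ δ > (0 : ℝ), ∀ I : Subdivision 0 1,
      I.mesh < δ → unifDist (castM M hγ01 hγ00 (I.compPath μ γ0)) φ0 < η)
    (hφ1 : ∀ η : ℝ≥0∞, 0 < η → ∃ δ > (0 : ℝ), ∀ I : Subdivision 0 1,
      I.mesh < δ → unifDist (castM M hγ11 hγ10 (I.compPath μ γ1)) φ1 < η) :
    φ0 = φ1 := by
  have hid := h.id_eq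
  have hL := h.L_nonneg
  have hε := h.eps_pos
  have hℓ : 0 ≤ ℓ := by
    simpa using dist_nonneg.trans (hH 0 0 1 0 (by simp) (by simp) (by simp) (by simp))
  -- The factor `2` accounts for the diagonals of the grid squares.
  set lam : ℝ := 2 * ℓ with hlam
  have hlam0 : 0 ≤ lam := by positivity
  set K : ℝ := Real.exp (L * lam) * ((2 + L * lam) * ((∑ i, C i) * lam ^ (2 + ε)))
  have hrow : ∀ N : ℕ, 0 < N → ∃ R : ℕ → M y → M x,
      (∀ hN : 0 < N, R 0 = castM M hγ01 hγ00 ((gridSub hN).compPath μ γ0)) ∧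
      (∀ hN : 0 < N, R N = castM M hγ11 hγ10 ((gridSub hN).compPath μ γ1)) ∧
      ∀ m, edist (R 0 m) (R N m) ≤ ENNReal.ofReal (K * (N : ℝ) ^ (-ε)) := by
    intro N hN
    have hN0 : (0 : ℝ) < N := by exact_mod_cast hN
    let p : ℕ → ℕ → P := fun i j => H (grid N i) (grid N j)
    have hp0 : ∀ i, p i 0 = x := fun i => by
      simp only [p, grid_zero]; exact hHx _ (grid_mem N i)
    have hpN : ∀ i, p i N = y := fun i => by
      simp only [p, grid_self hN]; exact hHy _ (grid_mem N i)
    -- Any two points of the grid that differ by at most one step in each index are `lam / N`-close.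
    have hd : ∀ i j i' j', |grid N i - grid N i'| ≤ 1 / N → |grid N j - grid N j'| ≤ 1 / N →
        dist (p i j) (p i' j') ≤ lam / N := by
      intro i j i' j' h1 h2
      calc dist (p i j) (p i' j')
          ≤ ℓ * (|grid N i - grid N i'| + |grid N j - grid N j'|) :=
            hH _ _ _ _ (grid_mem N i) (grid_mem N j) (grid_mem N i') (grid_mem N j')
        _ ≤ ℓ * (1 / N + 1 / N) := by gcongr
        _ = lam / N := by rw [hlam]; ring
    have hz : ∀ i, |grid N i - grid N i| ≤ 1 / N := fun i => by simp
    have hA : (1 + L * (lam / N)) ^ N ≤ Real.exp (L * lam) := by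
      calc (1 + L * (lam / N)) ^ N ≤ Real.exp (L * (lam / N)) ^ N := by
            gcongr; rw [add_comm]; exact Real.add_one_le_exp _
        _ = Real.exp (L * lam) := by
            rw [← Real.exp_nat_mul]; congr 1; field_simp
    let R : ℕ → M y → M x := fun i => castM M (hpN i) (hp0 i) (compAlong μ (p i) N)
    have hstep : ∀ i m, edist (R i m) (R (i + 1) m) ≤
        N * ENNReal.ofReal (Real.exp (L * lam) * squareErr ε L C (lam / N)) := by
      intro i m
      refine edist_castM_le hid _ _ _ _ _ _ (fun m => ?_) m
      refine knit_row h (fun j => hd _ _ _ _ (hz i) (grid_step N j))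
        (fun j => hd _ _ _ _ (hz _) (grid_step N j))
        (fun j => hd _ _ _ _ (grid_step N i) ?_) N hA m
      rw [abs_sub_comm]; exact grid_step N j
    refine ⟨R, fun hN' => ?_, fun hN' => ?_, fun m => ?_⟩
    · rw [Subdivision.compPath, castM_castM]
      refine castM_compAlong_congr μ ?_ N _ _ _ _
      funext j
      simp only [p, grid_zero]
      exact hH0 _ (grid_mem N j)
    · rw [Subdivision.compPath, castM_castM]
      refine castM_compAlong_congr μ ?_ N _ _ _ _
      funext j
      simp only [p, grid_self hN]
      exact hH1 _ (grid_mem N j)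
    · calc edist (R 0 m) (R N m)
          ≤ ∑ i ∈ Finset.range N, edist (R i m) (R (i + 1) m) :=
            edist_le_range_sum_edist (fun i => R i m) N
        _ ≤ ∑ _i ∈ Finset.range N,
              N * ENNReal.ofReal (Real.exp (L * lam) * squareErr ε L C (lam / N)) :=
            Finset.sum_le_sum fun i _ => hstep i m
        _ = ENNReal.ofReal
              (N * (N * (Real.exp (L * lam) * squareErr ε L C (lam / N)))) := by
            rw [Finset.sum_const, Finset.card_range, nsmul_eq_mul,
              ENNReal.ofReal_mul hN0.le, ENNReal.ofReal_mul hN0.le, ENNReal.ofReal_natCast]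
        _ ≤ _ := ENNReal.ofReal_le_ofReal (total_le hL hlam0 h.C_pos hN)
  funext m
  refine edist_le_zero.1 (le_of_forall_pos_le_add fun η hη => ?_)
  have hη3 : 0 < η / 3 := ENNReal.div_pos hη.ne' (by norm_num)
  obtain ⟨δ0, hδ0, h0⟩ := hφ0 _ hη3
  obtain ⟨δ1, hδ1, h1⟩ := hφ1 _ hη3
  have hlim : Filter.Tendsto (fun N : ℕ => ENNReal.ofReal (K * (N : ℝ) ^ (-ε)))
      Filter.atTop (nhds 0) := by
    have := ((tendsto_rpow_neg_atTop hε).comp tendsto_natCast_atTop_atTop).const_mul K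
    simpa using ENNReal.tendsto_ofReal this
  have hmesh := tendsto_one_div_atTop_nhds_zero_nat (𝕜 := ℝ)
  obtain ⟨N, hN1, hN2, hN3, hN⟩ := ((hlim.eventually_lt_const hη3).and
    ((hmesh.eventually_lt_const hδ0).and ((hmesh.eventually_lt_const hδ1).and
      (Filter.eventually_gt_atTop 0)))).exists
  obtain ⟨R, hR0, hR1, hR⟩ := hrow N hN
  have e0 : edist (R 0 m) (φ0 m) ≤ η / 3 := by
    rw [hR0 hN]
    exact (le_iSup (fun m => edist _ (φ0 m)) m).trans
      (h0 (gridSub hN) ((gridSub_mesh_le hN).trans_lt hN2)).le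
  have e1 : edist (R N m) (φ1 m) ≤ η / 3 := by
    rw [hR1 hN]
    exact (le_iSup (fun m => edist _ (φ1 m)) m).trans
      (h1 (gridSub hN) ((gridSub_mesh_le hN).trans_lt hN3)).le
  calc edist (φ0 m) (φ1 m)
      ≤ edist (φ0 m) (R 0 m) + edist (R 0 m) (R N m) + edist (R N m) (φ1 m) :=
        edist_triangle4 _ _ _ _
    _ ≤ η / 3 + η / 3 + η / 3 := by
        rw [edist_comm (φ0 m)]
        exact add_le_add (add_le_add e0 ((hR m).trans hN1.le)) e1
    _ = 0 + η := by rw [ENNReal.add_thirds, zero_add]
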